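/- Let H be an (n-k)×n matrix over GF(4) and let M be the 2(n-k)×2(n-k) matrix over GF(2) given by the entrywise trace of [[H H†, ω̄ H H†],[ω H H†, H H†]] (where † is conjugate transpose over GF(4)). Then M is congruent over GF(4) to the block-diagonal matrix H̄ H^T ⊕ H H†, and consequently rank(M) = 2·rank(H H†). -/

import Mathlib

/-- Entrywise trace of GF(4) over GF(2), with values in `ZMod 2`:
`tr x = x + x²` equals `0` or `1` in GF(4). -/
noncomputable def gf4TrToGF2 (x : GaloisField 2 2) : ZMod 2 :=
  open scoped Classical in
  if x + x ^ 2 = 0 then 0 else 1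

/-- Conjugate transpose over GF(4), where conjugation is `x ↦ x²`. -/
noncomputable def gf4Dagger {m n : Type*}
    (A : Matrix m n (GaloisField 2 2)) :
    Matrix n m (GaloisField 2 2) :=
  fun i j => (A j i) ^ 2

namespace Matrix

variable {F E m n : Type*} [Field F] [Field E] [Fintype m] [DecidableEq m] [Fintype n]
  [DecidableEq n]

theorem exists_isUnit_mul_diagonal_mul (M : Matrix m m F) :
    ∃ (V U : Matrix m m F) (w : m → F), IsUnit V ∧ IsUnit U ∧ M = V * diagonal w * U := by
  obtain ⟨L, L', w, h⟩ := Pivot.exists_list_transvec_mul_diagonal_mul_list_transvec M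
  refine ⟨_, _, w, ?_, ?_, h⟩ <;>
    simp [isUnit_iff_isUnit_det, TransvectionStruct.det_toMatrix_prod]

theorem rank_isUnit_mul_mul_isUnit {V U : Matrix m m F} (hV : IsUnit V) (hU : IsUnit U)
    (M : Matrix m m F) : (V * M * U).rank = M.rank := by
  rw [rank_mul_eq_left_of_isUnit_det _ _ ((isUnit_iff_isUnit_det _).1 hU),
    rank_mul_eq_right_of_isUnit_det _ _ ((isUnit_iff_isUnit_det _).1 hV)]

theorem rank_map_of_field (f : F →+* E) (M : Matrix m m F) : (M.map f).rank = M.rank := by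
  classical
  obtain ⟨V, U, w, hV, hU, rfl⟩ := exists_isUnit_mul_diagonal_mul M
  rw [Matrix.map_mul, Matrix.map_mul, diagonal_map (map_zero f),
    rank_isUnit_mul_mul_isUnit (V := V.map f) (U := U.map f) (hV.map f.mapMatrix)
      (hU.map f.mapMatrix), rank_isUnit_mul_mul_isUnit hV hU, rank_diagonal, rank_diagonal]
  exact Fintype.card_congr (Equiv.subtypeEquivRight fun i ↦ by simp)

theorem rank_fromBlocks_zero_zero (A : Matrix m m F) (D : Matrix n n F) :
    (fromBlocks A 0 0 D).rank = A.rank + D.rank := by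
  classical
  obtain ⟨V, U, w, hV, hU, rfl⟩ := exists_isUnit_mul_diagonal_mul A
  obtain ⟨V', U', w', hV', hU', rfl⟩ := exists_isUnit_mul_diagonal_mul D
  have isUnit_blocks {P : Matrix m m F} {Q : Matrix n n F} (hP : IsUnit P) (hQ : IsUnit Q) :
      IsUnit (fromBlocks P 0 0 Q) := by
    rw [isUnit_iff_isUnit_det] at *
    simpa using And.intro hP.ne_zero hQ.ne_zero
  have h : fromBlocks (V * diagonal w * U) 0 0 (V' * diagonal w' * U') =
      fromBlocks V 0 0 V' * diagonal (Sum.elim w w') * fromBlocks U 0 0 U' := by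
    simp [← fromBlocks_diagonal, fromBlocks_multiply]
  rw [h, rank_isUnit_mul_mul_isUnit (isUnit_blocks hV hV') (isUnit_blocks hU hU'),
    rank_isUnit_mul_mul_isUnit hV hU, rank_isUnit_mul_mul_isUnit hV' hU',
    rank_diagonal, rank_diagonal, rank_diagonal, ← Fintype.card_sum]
  exact Fintype.card_congr Equiv.subtypeSum

end Matrix

theorem gf4_pow_four (x : GaloisField 2 2) : x ^ 4 = x := by
  have := Fintype.ofFinite (GaloisField 2 2)
  have h := FiniteField.pow_card x
  rwa [← Nat.card_eq_fintype_card, GaloisField.card 2 2 two_ne_zero] at h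

theorem gf4_add_sq (x y : GaloisField 2 2) : (x + y) ^ 2 = x ^ 2 + y ^ 2 :=
  add_pow_char _ _ 2

theorem algebraMap_gf4TrToGF2 (x : GaloisField 2 2) :
    algebraMap (ZMod 2) (GaloisField 2 2) (gf4TrToGF2 x) = x + x ^ 2 := by
  unfold gf4TrToGF2
  split_ifs with h
  · simp [h]
  · have hsq : (x + x ^ 2) * (x + x ^ 2) = 1 * (x + x ^ 2) := by
      linear_combination gf4_add_sq x (x ^ 2) + gf4_pow_four x
    simp [mul_right_cancel₀ h hsq]

theorem gf4Dagger_eq {m n : Type*} (A : Matrix m n (GaloisField 2 2)) :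
    gf4Dagger A = (A.map (frobenius (GaloisField 2 2) 2)).transpose := rfl

theorem map_frobenius_mul_gf4Dagger {m n : Type*} [Fintype n]
    (H : Matrix m n (GaloisField 2 2)) :
    (H * gf4Dagger H).map (frobenius (GaloisField 2 2) 2) = H.map (· ^ 2) * H.transpose := by
  ext i j
  simp only [Matrix.map_apply, Matrix.mul_apply, map_sum, map_mul, gf4Dagger, frobenius_def,
    Matrix.transpose_apply, ← pow_mul, Nat.reduceMul, gf4_pow_four]

theorem transpose_mul_gf4Dagger {m n : Type*} [Fintype n] (H : Matrix m n (GaloisField 2 2)) :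
    (H * gf4Dagger H).transpose = H.map (· ^ 2) * H.transpose := by
  rw [Matrix.transpose_mul]
  rfl

theorem stmt_13 (n k : ℕ) (ω : GaloisField 2 2) (hω : ω ^ 2 = ω + 1)
    (H : Matrix (Fin (n - k)) (Fin n) (GaloisField 2 2)) :
    letI φ := algebraMap (ZMod 2) (GaloisField 2 2)
    letI K := H * gf4Dagger H
    letI Hbar := H.map (· ^ 2)
    -- M = entrywise trace of [[HH†, ω̄ HH†],[ω HH†, HH†]]
    letI M : Matrix (Fin (n - k) ⊕ Fin (n - k)) (Fin (n - k) ⊕ Fin (n - k)) (ZMod 2) :=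
      (Matrix.fromBlocks K (ω ^ 2 • K) (ω • K) K).map gf4TrToGF2
    (∃ A : Matrix (Fin (n - k) ⊕ Fin (n - k)) (Fin (n - k) ⊕ Fin (n - k))
        (GaloisField 2 2),
      IsUnit A ∧
      A * M.map φ * gf4Dagger A
        = Matrix.fromBlocks (Hbar * H.transpose) 0 0 K) ∧
    M.rank = 2 * K.rank := by
  set φ := algebraMap (ZMod 2) (GaloisField 2 2)
  set K := H * gf4Dagger H
  set L := H.map (· ^ 2) * H.transpose with hL
  have hω4 : (ω ^ 2) ^ 2 = ω := by rw [← pow_mul, gf4_pow_four]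
  have hKL (i j) : K i j ^ 2 = L i j :=
    congrFun₂ (map_frobenius_mul_gf4Dagger H) i j
  set A : Matrix (Fin (n - k) ⊕ Fin (n - k)) (Fin (n - k) ⊕ Fin (n - k)) (GaloisField 2 2) :=
    Matrix.fromBlocks (ω • 1) 1 (ω ^ 2 • 1) 1 with hA
  have hAd : gf4Dagger A = Matrix.fromBlocks (ω ^ 2 • 1) (ω • 1) 1 1 := by
    rw [gf4Dagger_eq, hA, Matrix.fromBlocks_map, Matrix.fromBlocks_transpose]
    congr 1 <;> ext i j <;>
      simp [Matrix.one_apply, Matrix.smul_apply, frobenius_def, hω4, eq_comm, ite_pow]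
  set M := (Matrix.fromBlocks K (ω ^ 2 • K) (ω • K) K).map gf4TrToGF2
  have hM : M.map φ = Matrix.fromBlocks (K + L) (ω ^ 2 • K + ω • L) (ω • K + ω ^ 2 • L)
      (K + L) := by
    ext (i | i) (j | j) <;>
      simp [M, φ, algebraMap_gf4TrToGF2, mul_pow, hKL, hω4]
  have hAu : IsUnit A := by
    refine IsUnit.of_mul_eq_one (Matrix.fromBlocks 1 1 (ω ^ 2 • 1) (ω • 1)) ?_
    rw [hA, Matrix.fromBlocks_multiply, ← Matrix.fromBlocks_one]
    congr 1 <;> ext i j <;> simp [Matrix.one_apply] <;> grind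
  have hcong : A * M.map φ * gf4Dagger A = Matrix.fromBlocks L 0 0 K := by
    rw [hAd, hM, hA, Matrix.fromBlocks_multiply, Matrix.fromBlocks_multiply]
    congr 1 <;> ext i j <;> simp <;> grind
  refine ⟨⟨A, hAu, hcong⟩, ?_⟩
  have hAdu : IsUnit (gf4Dagger A) := by
    rw [gf4Dagger_eq, Matrix.isUnit_transpose]
    exact hAu.map (frobenius (GaloisField 2 2) 2).mapMatrix
  rw [← Matrix.rank_map_of_field φ M, ← Matrix.rank_isUnit_mul_mul_isUnit hAu hAdu, hcong,
    Matrix.rank_fromBlocks_zero_zero, hL, ← transpose_mul_gf4Dagger, Matrix.rank_transpose,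
    two_mul]
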